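/- arXiv:1905.12724 — 2 statements merged into one kernel-verified Lean document; each statement's English description precedes it below -/
import Mathlib

section
/- Let V be a finite nonempty type with n elements and k : V → V → ℝ a kernel satisfying k(x,y) = k(y,x) ≥ 0 for all x, y, with weighted degree d(x) := Σ_y k(x,y) assumed strictly positive for every x. Define the random-walk transition kernel p(x,y) := k(x,y)/d(x), the distribution π(x) := d(x)/Σ_z d(z), and the symmetrically normalized matrix A(x,y) := k(x,y)/√(d(x)·d(y)). Suppose φ_1, …, φ_n : V → ℝ form an orthonormal basis of ℝ^V consisting of eigenvectors of A with real eigenvalues λ_1, …, λ_n, and define the diffusion eigenfunctions ψ_j(x) := φ_j(x)/√(π(x)). Then the diffusion distance satisfies, for all x, y ∈ V: D(x,y)² := Σ_u (p(x,u) − p(y,u))² / π(u) = Σ_{j=1}^n λ_j² · (ψ_j(x) − ψ_j(y))². In particular, the diffusion map x ↦ (λ_1 ψ_1(x), …, λ_n ψ_n(x)) is an isometry from the diffusion distance on V into Euclidean space ℝ^n. -/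
/-!
Dividing by `√π(u)` turns the diffusion distance into an ordinary `ℓ²` distance: for
`f u = A x u / √π(x) - A y u / √π(y)` one has `f u = (p x u - p y u) / √π(u)`, because
`p x u / √π(u) = A x u / √π(x)`. The eigenvector equation gives the coefficient
`∑_u f u φ_j u = λ_j (ψ_j x - ψ_j y)`, so the identity is Parseval's identity for `f`
(`parseval_of_orthonormal_rows`).
-/

/-- Parseval's identity. Orthonormality of `card V` vectors says that the square matrix with rows
`φ j` has its transpose as a right inverse, hence also as a left inverse. -/
lemma parseval_of_orthonormal_rows {V : Type*} [Fintype V]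
    (φ : Fin (Fintype.card V) → V → ℝ)
    (horth : ∀ i j, ∑ x, φ i x * φ j x = if i = j then (1 : ℝ) else 0) (f : V → ℝ) :
    ∑ u, f u ^ 2 = ∑ j, (∑ u, f u * φ j u) ^ 2 := by
  classical
  let M : Matrix (Fin (Fintype.card V)) V ℝ := φ
  have h1 : M * M.transpose = 1 := by
    ext i j
    rw [Matrix.mul_apply, Matrix.one_apply]
    exact horth i j
  have h2 : M.transpose * M = 1 :=
    (Matrix.mul_eq_one_comm_of_card_eq _ _ _ (by simp)).mp h1
  have h3 : dotProduct (M.mulVec f) (M.mulVec f) = dotProduct f f := by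
    rw [Matrix.dotProduct_mulVec, ← Matrix.mulVec_transpose, Matrix.mulVec_mulVec, h2,
      Matrix.one_mulVec]
  simp only [dotProduct, Matrix.mulVec] at h3
  simp only [pow_two]
  rw [← h3]
  simp only [M, mul_comm]

/-- With `a = d(x)`, `b = d(u)`, `s = ∑ d` and `c = k(x,u)`, this is
`p(x,u) / √π(u) = A(x,u) / √π(x)`. -/
lemma transition_div_sqrt {a b s : ℝ} (ha : 0 < a) (hb : 0 < b) (hs : 0 < s) (c : ℝ) :
    c / a / Real.sqrt (b / s) = c / Real.sqrt (a * b) / Real.sqrt (a / s) := by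
  have ha' := Real.sqrt_pos.mpr ha
  have hb' := Real.sqrt_pos.mpr hb
  have hs' := Real.sqrt_pos.mpr hs
  rw [Real.sqrt_div hb.le, Real.sqrt_div ha.le, Real.sqrt_mul ha.le]
  nth_rewrite 1 [← Real.mul_self_sqrt ha.le]
  field_simp

/-- Spectral identity for the diffusion distance: for a symmetric non-negative
kernel `k` on a finite set `V` with positive degrees, if `φ_1, …, φ_n` is an
orthonormal eigenbasis of the symmetrically normalized matrix
`A x y = k x y / √(d x · d y)` with eigenvalues `λ_j`, and
`ψ_j x = φ_j x / √(π x)`, then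
`D(x,y)² = ∑_u (p x u − p y u)² / π u = ∑_j λ_j² (ψ_j x − ψ_j y)²`,
i.e. the diffusion map `x ↦ (λ_j ψ_j x)_j` is an isometry from the diffusion
distance into Euclidean space `ℝ^n`. -/
theorem stmt_5 {V : Type*} [Fintype V] [Nonempty V] (k : V → V → ℝ)
    (hsym : ∀ x y, k x y = k y x) (hnn : ∀ x y, 0 ≤ k x y)
    (hd : ∀ x, 0 < ∑ y, k x y)
    (φ : Fin (Fintype.card V) → V → ℝ) (lam : Fin (Fintype.card V) → ℝ)
    (horth : ∀ i j, ∑ x, φ i x * φ j x = if i = j then (1 : ℝ) else 0)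
    (heig : ∀ i x, ∑ y, (k x y / Real.sqrt ((∑ y', k x y') * (∑ y', k y y'))) * φ i y
      = lam i * φ i x) :
    let d : V → ℝ := fun x => ∑ y, k x y
    let p : V → V → ℝ := fun x y => k x y / d x
    let π : V → ℝ := fun x => d x / ∑ z, d z
    let ψ : Fin (Fintype.card V) → V → ℝ := fun j x => φ j x / Real.sqrt (π x)
    ∀ x y, ∑ u, (p x u - p y u) ^ 2 / π u
      = ∑ j, (lam j) ^ 2 * (ψ j x - ψ j y) ^ 2 := by
  intro d p π ψ x y
  have hd' : ∀ z, 0 < d z := hd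
  have hS : 0 < ∑ z, d z := Finset.sum_pos (fun z _ => hd' z) Finset.univ_nonempty
  have hπ : ∀ z, 0 < π z := fun z => div_pos (hd' z) hS
  have key : ∀ z u, p z u / Real.sqrt (π u) = k z u / Real.sqrt (d z * d u) / Real.sqrt (π z) :=
    fun z u => transition_div_sqrt (hd' z) (hd' u) hS (k z u)
  have hcoef : ∀ j z, ∑ u, p z u / Real.sqrt (π u) * φ j u = lam j * ψ j z := by
    intro j z
    calc ∑ u, p z u / Real.sqrt (π u) * φ j u
        = (∑ u, k z u / Real.sqrt (d z * d u) * φ j u) / Real.sqrt (π z) := by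
          rw [Finset.sum_div]
          refine Finset.sum_congr rfl fun u _ => ?_
          rw [key]
          ring
      _ = lam j * φ j z / Real.sqrt (π z) := congrArg (· / Real.sqrt (π z)) (heig j z)
      _ = lam j * ψ j z := mul_div_assoc _ _ _
  have hf := parseval_of_orthonormal_rows φ horth
    (fun u => p x u / Real.sqrt (π u) - p y u / Real.sqrt (π u))
  calc ∑ u, (p x u - p y u) ^ 2 / π u
      = ∑ u, (p x u / Real.sqrt (π u) - p y u / Real.sqrt (π u)) ^ 2 := by
        refine Finset.sum_congr rfl fun u _ => ?_
        rw [← sub_div, div_pow, Real.sq_sqrt (hπ u).le]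
    _ = _ := hf
    _ = ∑ j, (lam j) ^ 2 * (ψ j x - ψ j y) ^ 2 := by
        refine Finset.sum_congr rfl fun j _ => ?_
        simp only [sub_mul, Finset.sum_sub_distrib]
        rw [hcoef, hcoef]
        ring
end

section
/- Let A and E be real symmetric m × m matrices such that rank(A) ≤ d and the operator norm of E satisfies ‖E · v‖₂ ≤ ε · ‖v‖₂ for every v ∈ ℝ^m (for some ε ≥ 0). Then the number of eigenvalues of A + E that are strictly greater than ε, counted with multiplicity, is at most d. -/
/-!
If more than `d` eigenvalues of `A + E` exceeded `ε`, their orthonormal eigenvectors would span a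
space of dimension greater than `rank A`, so some nonzero combination `v = ∑ cᵢ bᵢ` would satisfy
`A v = 0`. Then `⟪v, E v⟫ = ⟪v, (A + E) v⟫ = ∑ λᵢ cᵢ² > ε ∑ cᵢ² = ε ‖v‖²`, whereas Cauchy–Schwarz
and the bound on `E` give `⟪v, E v⟫ ≤ ε ‖v‖²`.
-/

/-- The strict lower bound for an operator acting diagonally on an orthonormal family, proved by
pairing with `∑ cᵢ bᵢ`; this form requires no sign condition on `ε`. -/
lemma lt_norm_sum_smul_of_orthonormal {V ι : Type*} [NormedAddCommGroup V]
    [InnerProductSpace ℝ V] [Fintype ι] {b : ι → V} (hb : Orthonormal ℝ b) {ε : ℝ}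
    {μ c : ι → ℝ} (hμ : ∀ i, ε < μ i) (hc : c ≠ 0) :
    ε * ‖∑ i, c i • b i‖ < ‖∑ i, (μ i * c i) • b i‖ := by
  by_contra! h
  have h1 := real_inner_le_norm (∑ i, c i • b i) (∑ i, (μ i * c i) • b i)
  have h2 := mul_le_mul_of_nonneg_left h (norm_nonneg (∑ i, c i • b i))
  have h3 : ‖∑ i, c i • b i‖ * (ε * ‖∑ i, c i • b i‖) = ε * ∑ i, c i * c i := by
    have := real_inner_self_eq_norm_sq (∑ i, c i • b i)
    rw [hb.inner_sum] at this
    simp only [conj_trivial] at this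
    rw [this]
    ring
  rw [hb.inner_sum] at h1
  simp only [conj_trivial] at h1
  obtain ⟨j, hj⟩ := Function.ne_iff.mp hc
  have h4 : ε * ∑ i, c i * c i < ∑ i, c i * (μ i * c i) := by
    rw [Finset.mul_sum]
    refine Finset.sum_lt_sum (fun i _ => ?_) ⟨j, Finset.mem_univ _, ?_⟩
    · nlinarith [mul_nonneg (sub_nonneg.2 (hμ i).le) (mul_self_nonneg (c i))]
    · nlinarith [mul_pos (sub_pos.2 (hμ j)) (mul_self_pos.2 hj)]
  linarith

/-- If `A` and `E` are real symmetric `m × m` matrices with `rank A ≤ d` and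
`‖E v‖₂ ≤ ε ‖v‖₂` for all `v ∈ ℝ^m`, then the number of eigenvalues of `A + E`
strictly greater than `ε`, counted with multiplicity, is at most `d`. -/
theorem stmt_7 {m d : ℕ} (A E : Matrix (Fin m) (Fin m) ℝ)
    (hA : A.IsSymm) (hE : E.IsSymm) (ε : ℝ) (hε : 0 ≤ ε)
    (hrank : A.rank ≤ d)
    (hop : ∀ v : EuclideanSpace ℝ (Fin m),
      ‖(EuclideanSpace.equiv (Fin m) ℝ).symm (E.mulVec v)‖ ≤ ε * ‖v‖) :
    ∃ hAE : (A + E).IsHermitian,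
      (Finset.univ.filter fun i => ε < hAE.eigenvalues i).card ≤ d := by
  have hAE : (A + E).IsHermitian := by
    rw [Matrix.IsHermitian, Matrix.conjTranspose_eq_transpose_of_trivial]
    exact hA.add hE
  refine ⟨hAE, ?_⟩
  by_contra! hcard
  set b := hAE.eigenvectorBasis
  set S := Finset.univ.filter fun i => ε < hAE.eigenvalues i
  -- `L` sends a coefficient family `c` to the vector `∑ cᵢ bᵢ`, and `A ∘ L` lands in the range of
  -- `A`, whose dimension is too small for injectivity.
  let L : (S → ℝ) →ₗ[ℝ] (Fin m → ℝ) :=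
    (WithLp.linearEquiv 2 ℝ (Fin m → ℝ)).toLinearMap ∘ₗ
      Fintype.linearCombination ℝ (fun i : S => b i)
  have hL : ∀ c, L c = (∑ i, c i • b (i : Fin m)).ofLp := fun c => by
    simp [L, Fintype.linearCombination_apply]
  have hker : LinearMap.ker (A.mulVecLin.rangeRestrict ∘ₗ L) ≠ ⊥ := by
    apply LinearMap.ker_ne_bot_of_finrank_lt
    rw [Module.finrank_fintype_fun_eq_card, Fintype.card_coe]
    exact hrank.trans_lt hcard
  obtain ⟨c, hc, hc0⟩ := (Submodule.ne_bot_iff _).mp hker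
  have hAv : A.mulVec (L c) = 0 := by
    simpa using congrArg Subtype.val (LinearMap.mem_ker.mp hc)
  have hEv : E.mulVec (L c) = (∑ i : S, (hAE.eigenvalues i * c i) • b (i : Fin m)).ofLp := by
    have h : E.mulVec (L c) = (A + E).mulVec (L c) := by rw [Matrix.add_mulVec, hAv, zero_add]
    rw [h, hL]
    simp only [WithLp.ofLp_sum, WithLp.ofLp_smul, Matrix.mulVec_sum, Matrix.mulVec_smul]
    refine Finset.sum_congr rfl fun i _ => ?_
    rw [hAE.mulVec_eigenvectorBasis, smul_smul, mul_comm]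
  have hbound := hop (∑ i, c i • b (i : Fin m))
  rw [← hL, hEv] at hbound
  exact absurd hbound (not_le.mpr (lt_norm_sum_smul_of_orthonormal
    (b.orthonormal.comp _ Subtype.val_injective) (fun i : S => (Finset.mem_filter.mp i.2).2) hc0))
end
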